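/- arXiv:2011.07056 — 2 statements merged into one kernel-verified Lean document; each statement's English description precedes it below -/
import Mathlib

section
/- Let U be a set of k ≥ 2 distinct positive integers and let ε > 0. Then there exists a bounded set A ⊆ ℝ with dim_M A ≤ 1 − 1/k + ε such that for every x ∈ [0,1] there exists r ∈ ℝ with x + r·u ∈ A for every u ∈ U. Consequently, for all sufficiently large N one has G'_U(N) ≤ N^{1 − 1/k + ε}. -/
open Set Filter Bornology

/-- Covering number of `E` by open balls of radius `ε`. -/
noncomputable def covNum {X : Type*} [PseudoMetricSpace X] (E : Set X) (ε : ℝ) : ℕ∞ :=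
  ⨅ (t : Finset X) (_ : E ⊆ ⋃ x ∈ t, Metric.ball x ε), (t.card : ℕ∞)

/-- Upper Minkowski (box-counting) dimension. -/
noncomputable def dimM {X : Type*} [PseudoMetricSpace X] (E : Set X) : ℝ :=
  limsup (fun ε : ℝ => Real.log ((covNum E ε).toNat) / Real.log (1 / ε))
    (nhdsWithin 0 (Ioi 0))

/-- Packing dimension, as modified upper box dimension: the infimum of
`⨆ j, dimM (E j)` over countable covers of the set by bounded sets. -/
noncomputable def dimP {X : Type*} [PseudoMetricSpace X] (E : Set X) : ℝ :=
  sInf { a : ℝ | ∃ f : ℕ → Set X, (E ⊆ ⋃ j, f j) ∧ (∀ j, IsBounded (f j)) ∧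
    a = ⨆ j, dimM (f j) }

/-- `G'Unat U N` : the minimum cardinality of a finite set `B ⊆ ℤ` containing a `U`-pattern
`{x + r·u : u ∈ U}` (with `r ≠ 0`) for `N` distinct integer basepoints `x`. -/
noncomputable def G'Unat (U : Finset ℕ) (N : ℕ) : ℕ :=
  sInf { m | ∃ B : Finset ℤ, B.card = m ∧ ∃ X : Finset ℤ, X.card = N ∧
    ∀ x ∈ X, ∃ r : ℤ, r ≠ 0 ∧ ∀ u ∈ U, x + r * (u : ℤ) ∈ B }

/-- Index-`i` piece of the set: at scales `k*l+i`, points are just above the lattice. -/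
def pieceSet (k q K i : ℕ) : Set ℝ :=
  {y | 0 ≤ y ∧ y ≤ 1 + K ∧ ∀ l : ℕ, ∃ m : ℤ, (m : ℝ) ≤ (q : ℝ) ^ (k * l + i) * y ∧
    (q : ℝ) ^ (k * l + i) * y ≤ m + (K : ℝ) / q}

/-- At scale `n`, at most `c` cells meet `A`. -/
def Cells (A : Set ℝ) (q n c : ℕ) : Prop :=
  ∃ T : Finset ℤ, T.card ≤ c ∧ ∀ y ∈ A, ⌊(q : ℝ) ^ n * y⌋ ∈ T

lemma cells_step (A : Set ℝ) (q n c d : ℕ) (h : Cells A q n c)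
    (hd : ∀ y ∈ A, ⌊(q : ℝ) ^ (n + 1) * y⌋ - ⌊(q : ℝ) ^ n * y⌋ * q ∈ Finset.Ico (0 : ℤ) d) :
    Cells A q (n + 1) (c * d) := by
  obtain ⟨T, hT, hc⟩ := h
  refine ⟨(T ×ˢ Finset.Ico (0 : ℤ) d).image (fun p => p.1 * q + p.2), ?_, ?_⟩
  · refine Finset.card_image_le.trans ?_
    rw [Finset.card_product]
    simp only [Int.card_Ico, sub_zero, Int.toNat_natCast]
    exact Nat.mul_le_mul_right _ hT
  · intro y hy
    rw [Finset.mem_image]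
    refine ⟨(⌊(q : ℝ) ^ n * y⌋, ⌊(q : ℝ) ^ (n + 1) * y⌋ - ⌊(q : ℝ) ^ n * y⌋ * q), ?_, by ring⟩
    exact Finset.mem_product.2 ⟨hc y hy, hd y hy⟩

lemma cells_free (A : Set ℝ) (q n c : ℕ) (hq : 0 < q) (h : Cells A q n c) :
    Cells A q (n + 1) (c * q) := by
  apply cells_step A q n c q h
  intro y _
  have hq' : (0 : ℝ) < q := by exact_mod_cast hq
  have h1 := Int.floor_le ((q : ℝ) ^ n * y)
  have h2 := Int.lt_floor_add_one ((q : ℝ) ^ n * y)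
  have e : (q : ℝ) ^ (n + 1) * y = q * ((q : ℝ) ^ n * y) := by ring
  rw [e]
  generalize (q : ℝ) ^ n * y = z at *
  rw [Finset.mem_Ico]
  constructor
  · have : ⌊z⌋ * (q : ℤ) ≤ ⌊(q : ℝ) * z⌋ := by
      apply Int.le_floor.2
      push_cast
      nlinarith
    linarith
  · have : ⌊(q : ℝ) * z⌋ < ⌊z⌋ * (q : ℤ) + q := by
      apply Int.floor_lt.2
      push_cast
      nlinarith
    linarith

lemma cells_free_iter (A : Set ℝ) (q n c t : ℕ) (hq : 0 < q) (h : Cells A q n c) :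
    Cells A q (n + t) (c * q ^ t) := by
  induction t with
  | zero => simpa using h
  | succ t ih =>
    have := cells_free A q (n + t) _ hq ih
    rwa [mul_assoc, ← pow_succ] at this

lemma cells_restr (k q K i l c : ℕ) (hq : K < q) (h : Cells (pieceSet k q K i) q (k * l + i) c) :
    Cells (pieceSet k q K i) q (k * l + i + 1) (c * (K + 1)) := by
  apply cells_step _ q _ c (K + 1) h
  rintro y ⟨_, _, hy⟩
  obtain ⟨m, hm1, hm2⟩ := hy l
  have hq' : (0 : ℝ) < q := by
    have : 0 < q := by omega
    exact_mod_cast this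
  have hKq : (K : ℝ) / q < 1 := by
    rw [div_lt_one hq']; exact_mod_cast hq
  have e : (q : ℝ) ^ (k * l + i + 1) * y = q * ((q : ℝ) ^ (k * l + i) * y) := by ring
  rw [e]
  generalize (q : ℝ) ^ (k * l + i) * y = z at *
  have hf : ⌊z⌋ = m := Int.floor_eq_iff.2 ⟨hm1, by linarith⟩
  rw [hf, Finset.mem_Ico]
  have hz : (q : ℝ) * z ≤ m * q + K := by
    have := mul_le_mul_of_nonneg_left hm2 hq'.le
    rw [mul_add, mul_div_cancel₀ _ hq'.ne'] at this
    linarith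
  constructor
  · have : m * (q : ℤ) ≤ ⌊(q : ℝ) * z⌋ := by
      apply Int.le_floor.2
      push_cast
      nlinarith
    linarith
  · have : ⌊(q : ℝ) * z⌋ < m * (q : ℤ) + (K + 1) := by
      apply Int.floor_lt.2
      push_cast
      linarith
    push_cast
    linarith

lemma cells_block (k q K i l : ℕ) (hq : K < q) (hi : i < k) :
    Cells (pieceSet k q K i) q (k * l) ((K + 2) * (q ^ (k - 1) * (K + 1)) ^ l) := by
  induction l with
  | zero =>
    refine ⟨Finset.Icc 0 ((K : ℤ) + 1), ?_, ?_⟩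
    · simp only [Int.card_Icc]
      simp
    · rintro y ⟨h0, h1, _⟩
      simp only [mul_zero, pow_zero, one_mul, Finset.mem_Icc]
      refine ⟨Int.floor_nonneg.2 h0, ?_⟩
      have : ⌊y⌋ < (K : ℤ) + 2 := Int.floor_lt.2 (by push_cast; linarith)
      omega
  | succ l ih =>
    have h1 := cells_free_iter _ q _ _ i (by omega) ih
    have h2 := cells_restr k q K i l _ hq h1
    have h3 := cells_free_iter _ q _ _ (k - 1 - i) (by omega) h2
    have e : k * l + i + 1 + (k - 1 - i) = k * (l + 1) := by
      rw [mul_add]; omega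
    rw [e] at h3
    convert h3 using 1
    have : q ^ (k - 1) = q ^ i * q ^ (k - 1 - i) := by
      rw [← pow_add]; congr 1; omega
    rw [this]
    ring

/-- Greedy choice of the scaling factor. -/
noncomputable def greedy (q k : ℕ) (w : ℕ → ℕ) (x : ℝ) : ℕ → ℝ
  | 0 => 0
  | j + 1 => (⌈(q : ℝ) ^ j * (x + greedy q k w x j * w (j % k))⌉ / (q : ℝ) ^ j - x) / w (j % k)

lemma pattern_exists (k q K : ℕ) (w : ℕ → ℕ) (hk : 0 < k) (hq : 2 ≤ q)
    (hw : ∀ i < k, 0 < w i) (hK : ∀ i < k, 2 * w i ≤ K) (x : ℝ) (hx : x ∈ Icc (0 : ℝ) 1) :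
    ∃ r : ℝ, ∀ i < k, x + r * (w i : ℝ) ∈ pieceSet k q K i := by
  set f := greedy q k w x with hf
  have hq' : (2 : ℝ) ≤ q := by exact_mod_cast hq
  have hq0 : (0 : ℝ) < q := by linarith
  have hstep : ∀ j, f j ≤ f (j + 1) ∧ f (j + 1) ≤ f j + (1 / (q : ℝ)) ^ j ∧
      (q : ℝ) ^ j * (x + f (j + 1) * w (j % k))
        = ⌈(q : ℝ) ^ j * (x + f j * w (j % k))⌉ := by
    intro j
    have hwj : (1 : ℝ) ≤ w (j % k) := by exact_mod_cast hw _ (Nat.mod_lt _ hk)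
    have hp : (0 : ℝ) < (q : ℝ) ^ j := by positivity
    have e : f (j + 1) = (⌈(q : ℝ) ^ j * (x + f j * w (j % k))⌉ / (q : ℝ) ^ j - x)
      / w (j % k) := rfl
    have e2 : (q : ℝ) ^ j * (x + f (j + 1) * w (j % k))
        = ⌈(q : ℝ) ^ j * (x + f j * w (j % k))⌉ := by
      rw [e]; field_simp; ring
    have h1 := Int.le_ceil ((q : ℝ) ^ j * (x + f j * w (j % k)))
    have h2 := Int.ceil_lt_add_one ((q : ℝ) ^ j * (x + f j * w (j % k)))
    rw [← e2] at h1 h2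
    have hw0 : (0 : ℝ) < w (j % k) := by linarith
    have h1' := le_of_mul_le_mul_left h1 hp
    have h3 : f j ≤ f (j + 1) := le_of_mul_le_mul_right (by linarith) hw0
    refine ⟨h3, ?_, e2⟩
    have h4 : (q : ℝ) ^ j * ((f (j + 1) - f j) * w (j % k)) < 1 := by linarith
    have h5 : f (j + 1) - f j ≤ (f (j + 1) - f j) * w (j % k) := by nlinarith
    have h6 : (q : ℝ) ^ j * (f (j + 1) - f j) ≤ 1 :=
      (mul_le_mul_of_nonneg_left h5 hp.le).trans h4.le
    rw [one_div, inv_pow, ← sub_le_iff_le_add', ← one_div, le_div_iff₀ hp]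
    linarith
  have hmono : Monotone f := monotone_nat_of_le_succ (fun j => (hstep j).1)
  have hr1 : 1 / (q : ℝ) ≤ 1 / 2 := one_div_le_one_div_of_le (by norm_num) hq'
  have hr1' : 1 / (q : ℝ) < 1 := by linarith
  have hd : ∀ n, dist (f n) (f (n + 1)) ≤ 1 * (1 / (q : ℝ)) ^ n := by
    intro n
    rw [dist_comm, Real.dist_eq, abs_of_nonneg (by linarith [(hstep n).1])]
    linarith [(hstep n).2.1]
  obtain ⟨r, hr⟩ := cauchySeq_tendsto_of_complete (cauchySeq_of_le_geometric _ _ hr1' hd)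
  have hge : ∀ n, f n ≤ r := fun n => hmono.ge_of_tendsto hr n
  have hle : ∀ n, r ≤ f n + 2 * (1 / (q : ℝ)) ^ n := by
    intro n
    have h1 := dist_le_of_le_geometric_of_tendsto _ _ hr1' hd hr n
    rw [dist_comm, Real.dist_eq, abs_of_nonneg (by linarith [hge n])] at h1
    have h2 : 1 * (1 / (q : ℝ)) ^ n / (1 - 1 / (q : ℝ)) ≤ 2 * (1 / (q : ℝ)) ^ n := by
      rw [div_le_iff₀ (by linarith)]
      have : 0 ≤ (1 / (q : ℝ)) ^ n := by positivity
      nlinarith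
    linarith
  have hf0 : f 0 = 0 := rfl
  have hr0 : 0 ≤ r := by rw [← hf0]; exact hge 0
  have hr2 : r ≤ 2 := by have := hle 0; rw [hf0] at this; simpa using this
  refine ⟨r, fun i hi => ?_⟩
  have hwi : (1 : ℝ) ≤ w i := by exact_mod_cast hw i hi
  have hKi : 2 * (w i : ℝ) ≤ K := by exact_mod_cast hK i hi
  refine ⟨?_, ?_, ?_⟩
  · have := hx.1
    positivity
  · have := hx.2
    nlinarith
  · intro l
    have hmod : (k * l + i) % k = i := by
      rw [Nat.mul_add_mod, Nat.mod_eq_of_lt hi]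
    obtain ⟨-, -, h⟩ := hstep (k * l + i)
    rw [hmod] at h
    have hg := hge (k * l + i + 1)
    have hl := hle (k * l + i + 1)
    generalize k * l + i = j at *
    have hp : (0 : ℝ) < (q : ℝ) ^ j := by positivity
    refine ⟨⌈(q : ℝ) ^ j * (x + f j * w i)⌉, ?_, ?_⟩
    · rw [← h]
      gcongr
    · rw [← h]
      calc (q : ℝ) ^ j * (x + r * w i)
          ≤ (q : ℝ) ^ j * (x + (f (j + 1) + 2 * (1 / (q : ℝ)) ^ (j + 1)) * w i) := by gcongr
        _ = (q : ℝ) ^ j * (x + f (j + 1) * w i) + 2 * w i / q := by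
            rw [one_div, inv_pow, pow_succ]; field_simp; ring
        _ ≤ _ := by gcongr

lemma piece_cover (k q K i : ℕ) (s : ℝ) (hs : 0 ≤ s) (hi : i < k) (hq : K < q) (hq2 : 2 ≤ q)
    (hqs : (q : ℝ) ^ (k - 1) * (K + 1) ≤ ((q : ℝ) ^ k) ^ s) (δ : ℝ) (hδ : 0 < δ) (hδ1 : δ ≤ 1) :
    ∃ t : Finset ℝ, pieceSet k q K i ⊆ ⋃ x ∈ t, Metric.ball x δ ∧
      (t.card : ℝ) ≤ (K + 2) * ((q : ℝ) ^ k) ^ s * (1 / δ) ^ s := by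
  have hq' : (2 : ℝ) ≤ q := by exact_mod_cast hq2
  have hQ : 1 < (q : ℝ) ^ k := one_lt_pow₀ (by linarith) (by omega)
  have hQ0 : 0 < (q : ℝ) ^ k := by linarith
  obtain ⟨l, hl1, hl2⟩ := exists_nat_pow_near (one_le_one_div hδ hδ1) hQ
  obtain ⟨T, hT, hc⟩ := cells_block k q K i (l + 1) hq hi
  have hp : (0 : ℝ) < (q : ℝ) ^ (k * (l + 1)) := by positivity
  refine ⟨T.image (fun a : ℤ => (a : ℝ) / (q : ℝ) ^ (k * (l + 1))), ?_, ?_⟩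
  · intro y hy
    simp only [Finset.mem_image, Set.mem_iUnion, exists_prop]
    refine ⟨_, ⟨_, hc y hy, rfl⟩, ?_⟩
    rw [Metric.mem_ball, Real.dist_eq, abs_lt]
    have h1 := Int.floor_le ((q : ℝ) ^ (k * (l + 1)) * y)
    have h2 := Int.lt_floor_add_one ((q : ℝ) ^ (k * (l + 1)) * y)
    rw [← pow_mul, div_lt_iff₀ hδ] at hl2
    generalize (⌊(q : ℝ) ^ (k * (l + 1)) * y⌋ : ℝ) = a at *
    have h3 : a / (q : ℝ) ^ (k * (l + 1)) ≤ y := by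
      rw [div_le_iff₀ hp]; linarith
    have h4 : y - δ < a / (q : ℝ) ^ (k * (l + 1)) := by
      rw [lt_div_iff₀ hp]; linarith
    constructor <;> linarith
  · have h1 : ((T.image (fun a : ℤ => (a : ℝ) / (q : ℝ) ^ (k * (l + 1)))).card : ℝ) ≤
        (((K + 2) * (q ^ (k - 1) * (K + 1)) ^ (l + 1) : ℕ) : ℝ) := by
      exact_mod_cast Finset.card_image_le.trans hT
    refine h1.trans ?_
    push_cast
    rw [mul_assoc]
    gcongr
    calc ((q : ℝ) ^ (k - 1) * (K + 1)) ^ (l + 1) ≤ (((q : ℝ) ^ k) ^ s) ^ (l + 1) := by gcongr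
      _ = ((q : ℝ) ^ k) ^ s * (((q : ℝ) ^ k) ^ l) ^ s := by
        rw [pow_succ, mul_comm]
        congr 1
        rw [← Real.rpow_natCast, ← Real.rpow_natCast (_ ^ k) l, ← Real.rpow_mul hQ0.le,
          ← Real.rpow_mul hQ0.le, mul_comm]
      _ ≤ _ := by gcongr

lemma main_cover (U : Finset ℕ) (hU : ∀ u ∈ U, 0 < u) (hk : 2 ≤ U.card) (η : ℝ) (hη : 0 < η) :
    ∃ (A : Set ℝ) (C : ℝ), IsBounded A ∧ 1 ≤ C ∧
      (∀ δ : ℝ, 0 < δ → δ ≤ 1 → ∃ t : Finset ℝ, A ⊆ ⋃ x ∈ t, Metric.ball x δ ∧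
        (t.card : ℝ) ≤ C * (1 / δ) ^ (1 - 1 / (U.card : ℝ) + η)) ∧
      ∀ x ∈ Icc (0 : ℝ) 1, ∃ r : ℝ, ∀ u ∈ U, x + r * (u : ℝ) ∈ A := by
  set k := U.card with hkdef
  set K := 2 * ∑ u ∈ U, u with hKdef
  set w : ℕ → ℕ := fun i => if h : i < k then (U.equivFin.symm ⟨i, h⟩ : ℕ) else 0 with hwdef
  have hwU : ∀ i < k, w i ∈ U := by
    intro i hi
    simp only [hwdef, hi, dif_pos]
    exact (U.equivFin.symm ⟨i, hi⟩).2
  have hwsurj : ∀ u ∈ U, ∃ i < k, w i = u := by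
    intro u hu
    refine ⟨U.equivFin ⟨u, hu⟩, (U.equivFin ⟨u, hu⟩).2, ?_⟩
    simp [hwdef, hkdef]
  have hk0 : (0 : ℝ) < k := by
    have : 0 < k := by omega
    exact_mod_cast this
  have hk1 : (1 : ℝ) ≤ k := by
    have : 1 ≤ k := by omega
    exact_mod_cast this
  set s := 1 - 1 / (k : ℝ) + η with hs
  have hs0 : 0 ≤ s := by
    have : 1 / (k : ℝ) ≤ 1 := by rw [div_le_one hk0]; exact hk1
    linarith
  obtain ⟨q, hq1, hq2, hq3⟩ : ∃ q : ℕ, K < q ∧ 2 ≤ q ∧ (K : ℝ) + 1 ≤ (q : ℝ) ^ (k * η) := by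
    have h1 := ((tendsto_rpow_atTop (mul_pos hk0 hη)).comp
      tendsto_natCast_atTop_atTop).eventually_ge_atTop ((K : ℝ) + 1)
    obtain ⟨q, ha, hb, hc⟩ := ((eventually_gt_atTop K).and
      ((eventually_ge_atTop 2).and h1)).exists
    exact ⟨q, ha, hb, hc⟩
  have hq0 : (0 : ℝ) < q := by
    have : 0 < q := by omega
    exact_mod_cast this
  have hqs : (q : ℝ) ^ (k - 1) * (K + 1) ≤ ((q : ℝ) ^ k) ^ s := by
    have : ((q : ℝ) ^ k) ^ s = (q : ℝ) ^ (k - 1) * (q : ℝ) ^ (k * η) := by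
      rw [← Real.rpow_natCast, ← Real.rpow_natCast, ← Real.rpow_mul hq0.le, ← Real.rpow_add hq0]
      congr 1
      rw [hs, Nat.cast_sub (by omega)]
      field_simp
      push_cast
      ring
    rw [this]
    gcongr
  have hQs : 1 ≤ ((q : ℝ) ^ k) ^ s := by
    apply Real.one_le_rpow _ hs0
    apply one_le_pow₀
    have : 1 ≤ q := by omega
    exact_mod_cast this
  refine ⟨⋃ i ∈ Finset.range k, pieceSet k q K i, k * ((K + 2) * ((q : ℝ) ^ k) ^ s), ?_, ?_, ?_, ?_⟩
  · apply (Metric.isBounded_Icc (0 : ℝ) (1 + K)).subset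
    intro y hy
    simp only [Set.mem_iUnion] at hy
    obtain ⟨i, _, hy⟩ := hy
    exact ⟨hy.1, hy.2.1⟩
  · have : (0 : ℝ) ≤ K := by positivity
    have h2 : 1 ≤ ((K : ℝ) + 2) * ((q : ℝ) ^ k) ^ s := by nlinarith
    nlinarith
  · intro δ hδ hδ1
    have h := fun i (hi : i ∈ Finset.range k) =>
      piece_cover k q K i s hs0 (Finset.mem_range.1 hi) hq1 hq2 hqs δ hδ hδ1
    choose! t ht htc using h
    classical
    refine ⟨(Finset.range k).biUnion t, ?_, ?_⟩
    · intro y hy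
      simp only [Set.mem_iUnion] at hy
      obtain ⟨i, hi, hy⟩ := hy
      have := ht i hi hy
      simp only [Set.mem_iUnion] at this
      obtain ⟨c, hc, hy⟩ := this
      simp only [Set.mem_iUnion]
      exact ⟨c, Finset.mem_biUnion.2 ⟨i, hi, hc⟩, hy⟩
    · have h1 : (((Finset.range k).biUnion t).card : ℝ) ≤ ∑ i ∈ Finset.range k, ((t i).card : ℝ) := by
        exact_mod_cast Finset.card_biUnion_le
      refine h1.trans ((Finset.sum_le_sum htc).trans ?_)
      simp only [Finset.sum_const, Finset.card_range, nsmul_eq_mul]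
      apply le_of_eq; ring
  · intro x hx
    obtain ⟨r, hr⟩ := pattern_exists k q K w (by omega) hq2 (fun i hi => hU _ (hwU i hi))
      (fun i hi => Nat.mul_le_mul_left 2
        (Finset.single_le_sum (f := fun u => u) (fun _ _ => Nat.zero_le _) (hwU i hi))) x hx
    refine ⟨r, fun u hu => ?_⟩
    obtain ⟨i, hi, rfl⟩ := hwsurj u hu
    simp only [Set.mem_iUnion]
    exact ⟨i, Finset.mem_range.2 hi, hr i hi⟩

lemma dimM_le_of_cover (A : Set ℝ) (C s η : ℝ) (hC : 1 ≤ C) (hs : 0 ≤ s) (hη : 0 < η)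
    (h : ∀ δ : ℝ, 0 < δ → δ ≤ 1 → ∃ t : Finset ℝ, A ⊆ ⋃ x ∈ t, Metric.ball x δ ∧
        (t.card : ℝ) ≤ C * (1 / δ) ^ s) : dimM A ≤ s + η := by
  unfold dimM
  have hev : ∀ᶠ δ : ℝ in nhdsWithin 0 (Ioi 0), 0 < δ ∧ δ < 1 :=
    Ioo_mem_nhdsGT (by norm_num : (0 : ℝ) < 1)
  have hlog : ∀ᶠ δ : ℝ in nhdsWithin 0 (Ioi 0), Real.log C / η ≤ Real.log (1 / δ) := by
    have : Tendsto (fun δ : ℝ => Real.log (1 / δ)) (nhdsWithin 0 (Ioi 0)) atTop := by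
      simp only [one_div]
      exact Real.tendsto_log_atTop.comp tendsto_inv_nhdsGT_zero
    exact this.eventually_ge_atTop _
  apply limsup_le_of_le
  · apply IsCoboundedUnder.of_frequently_ge (a := 0)
    apply Eventually.frequently
    filter_upwards [hev] with δ hδ
    apply div_nonneg (Real.log_natCast_nonneg _)
    exact Real.log_nonneg (one_le_one_div hδ.1 hδ.2.le)
  · filter_upwards [hev, hlog] with δ hδ hl
    have h1 : 1 < 1 / δ := one_lt_one_div hδ.1 hδ.2
    have hL : 0 < Real.log (1 / δ) := Real.log_pos h1
    rw [div_le_iff₀ hL]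
    obtain ⟨t, ht, htc⟩ := h δ hδ.1 hδ.2.le
    have hcov : covNum A δ ≤ (t.card : ℕ∞) := iInf₂_le t ht
    have hn : (covNum A δ).toNat ≤ t.card := by
      simpa using ENat.toNat_le_toNat hcov (ENat.natCast_ne_top _)
    have hn' : ((covNum A δ).toNat : ℝ) ≤ C * (1 / δ) ^ s :=
      le_trans (by exact_mod_cast hn) htc
    have hp : 0 < (1 / δ) ^ s := Real.rpow_pos_of_pos (by linarith) _
    rw [div_le_iff₀ hη] at hl
    have hR : Real.log (C * (1 / δ) ^ s) ≤ (s + η) * Real.log (1 / δ) := by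
      rw [Real.log_mul (by linarith) hp.ne', Real.log_rpow (by linarith)]
      linarith
    refine le_trans ?_ hR
    rcases Nat.eq_zero_or_pos (covNum A δ).toNat with h0 | h0
    · rw [h0]
      simp only [Nat.cast_zero, Real.log_zero]
      apply Real.log_nonneg
      have := Real.one_le_rpow h1.le hs
      nlinarith
    · exact Real.log_le_log (by exact_mod_cast h0) hn'

lemma gcount_le (U : Finset ℕ) (A : Set ℝ) (N K : ℕ) (hN : 0 < N) (hK : ∀ u ∈ U, u ≤ K)
    (t : Finset ℝ) (ht : A ⊆ ⋃ x ∈ t, Metric.ball x (1 / (N : ℝ)))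
    (hA : ∀ x ∈ Icc (0 : ℝ) 1, ∃ r : ℝ, ∀ u ∈ U, x + r * (u : ℝ) ∈ A) :
    G'Unat U N ≤ t.card * (2 * K + 5) := by
  classical
  have hN' : (0 : ℝ) < N := by exact_mod_cast hN
  set B : Finset ℤ := (t ×ˢ Finset.Icc (-((K : ℤ) + 2)) (K + 2)).image
    (fun p => ⌊(N : ℝ) * p.1⌋ + p.2) with hB
  have hBc : B.card ≤ t.card * (2 * K + 5) := by
    refine Finset.card_image_le.trans ?_
    rw [Finset.card_product, Int.card_Icc]
    apply Nat.mul_le_mul_left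
    omega
  refine le_trans (Nat.sInf_le ⟨B, rfl, Finset.Ico 0 (N : ℤ), by simp, ?_⟩) hBc
  intro x hx
  rw [Finset.mem_Ico] at hx
  have hx0 : (0 : ℝ) ≤ x := by exact_mod_cast hx.1
  have hx1 : (x : ℝ) ≤ N := by exact_mod_cast hx.2.le
  obtain ⟨r, hr⟩ := hA ((x : ℝ) / N) ⟨by positivity, by rw [div_le_one hN']; exact hx1⟩
  obtain ⟨ρ, hρ0, hρ⟩ : ∃ ρ : ℤ, ρ ≠ 0 ∧ |(ρ : ℝ) - N * r| ≤ 1 := by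
    have h1 := Int.floor_le ((N : ℝ) * r)
    have h2 := Int.lt_floor_add_one ((N : ℝ) * r)
    by_cases h0 : ⌊(N : ℝ) * r⌋ = 0
    · refine ⟨1, one_ne_zero, ?_⟩
      rw [h0] at h1 h2
      push_cast at *
      rw [abs_le]; constructor <;> linarith
    · exact ⟨_, h0, by rw [abs_le]; constructor <;> linarith⟩
  refine ⟨ρ, hρ0, fun u hu => ?_⟩
  have hy := ht (hr u hu)
  simp only [Set.mem_iUnion] at hy
  obtain ⟨c, hc, hy⟩ := hy
  rw [Metric.mem_ball, Real.dist_eq, lt_div_iff₀ hN'] at hy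
  have hy' : |(x : ℝ) + N * r * u - N * c| < 1 := by
    have e : (x : ℝ) + N * r * u - N * c = ((x : ℝ) / N + r * u - c) * N := by
      field_simp
    rw [e, abs_mul, abs_of_pos hN']
    exact hy
  have huK : (u : ℝ) ≤ K := by exact_mod_cast hK u hu
  have hu' : |((ρ : ℝ) - N * r) * u| ≤ K := by
    rw [abs_mul, Nat.abs_cast]
    have : (0 : ℝ) ≤ u := by positivity
    nlinarith
  rw [abs_lt] at hy'
  rw [abs_le] at hu'
  have h1 := Int.floor_le ((N : ℝ) * c)
  have h2 := Int.lt_floor_add_one ((N : ℝ) * c)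
  rw [hB, Finset.mem_image]
  refine ⟨(c, x + ρ * u - ⌊(N : ℝ) * c⌋), ?_, by ring⟩
  rw [Finset.mem_product, Finset.mem_Icc]
  refine ⟨hc, ?_, ?_⟩
  · have : (-((K : ℝ) + 2)) ≤ x + ρ * u - ⌊(N : ℝ) * c⌋ := by linarith
    exact_mod_cast this
  · have : (x : ℝ) + ρ * u - ⌊(N : ℝ) * c⌋ ≤ K + 2 := by linarith
    exact_mod_cast this

/-- For a set `U` of `k ≥ 2` distinct positive integers and any `ε > 0`, there is a bounded
`A ⊆ ℝ` with `dim_M A ≤ 1 − 1/k + ε` containing a `U`-pattern with every basepoint in `[0,1]`;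
consequently `G'_U(N) ≤ N^{1 − 1/k + ε}` for all sufficiently large `N`. -/
theorem stmt16 (U : Finset ℕ) (hU : ∀ u ∈ U, 0 < u) (hk : 2 ≤ U.card)
    (ε : ℝ) (hε : 0 < ε) :
    (∃ A : Set ℝ, IsBounded A ∧ dimM A ≤ 1 - 1 / (U.card : ℝ) + ε ∧
      ∀ x ∈ Icc (0 : ℝ) 1, ∃ r : ℝ, ∀ u ∈ U, x + r * (u : ℝ) ∈ A) ∧
    (∃ N₀ : ℕ, ∀ N ≥ N₀, (G'Unat U N : ℝ) ≤ (N : ℝ) ^ (1 - 1 / (U.card : ℝ) + ε)) := by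
  obtain ⟨A, C, hb, hC, hcov, hpat⟩ := main_cover U hU hk (ε / 2) (half_pos hε)
  have hs : 0 ≤ 1 - 1 / (U.card : ℝ) + ε / 2 := by
    have h1 : (1 : ℝ) ≤ U.card := by
      have : 1 ≤ U.card := by omega
      exact_mod_cast this
    have : 1 / (U.card : ℝ) ≤ 1 := by rw [div_le_one (by linarith)]; exact h1
    linarith
  constructor
  · refine ⟨A, hb, ?_, hpat⟩
    have := dimM_le_of_cover A C _ (ε / 2) hC hs (half_pos hε) hcov
    linarith
  · set K := ∑ u ∈ U, u with hKdef
    have hK : ∀ u ∈ U, u ≤ K := fun u hu =>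
      Finset.single_le_sum (f := fun u => u) (fun _ _ => Nat.zero_le _) hu
    have h1 := ((tendsto_rpow_atTop (half_pos hε)).comp
      tendsto_natCast_atTop_atTop).eventually_ge_atTop (C * (2 * K + 5))
    obtain ⟨N₀, hN₀⟩ := eventually_atTop.1 ((eventually_ge_atTop 1).and h1)
    refine ⟨N₀, fun N hN => ?_⟩
    obtain ⟨hN1, hN2⟩ := hN₀ N hN
    have hN1' : (1 : ℝ) ≤ N := by exact_mod_cast hN1
    have hN0 : (0 : ℝ) < N := by linarith
    obtain ⟨t, ht, htc⟩ := hcov (1 / N) (by positivity) (by rw [div_le_one hN0]; exact hN1')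
    have hG := gcount_le U A N K hN1 hK t ht hpat
    have hG' : (G'Unat U N : ℝ) ≤ t.card * (2 * K + 5) := by exact_mod_cast hG
    rw [one_div_one_div] at htc
    simp only [Function.comp] at hN2
    have hp : (0 : ℝ) < (N : ℝ) ^ (1 - 1 / (U.card : ℝ) + ε / 2) := Real.rpow_pos_of_pos hN0 _
    calc (G'Unat U N : ℝ) ≤ t.card * (2 * K + 5) := hG'
      _ ≤ (C * (N : ℝ) ^ (1 - 1 / (U.card : ℝ) + ε / 2)) * (2 * K + 5) := by gcongr
      _ = (N : ℝ) ^ (1 - 1 / (U.card : ℝ) + ε / 2) * (C * (2 * K + 5)) := by ring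
      _ ≤ (N : ℝ) ^ (1 - 1 / (U.card : ℝ) + ε / 2) * (N : ℝ) ^ (ε / 2) := by gcongr
      _ = _ := by rw [← Real.rpow_add hN0]; congr 1; ring
end

section
/- There exists an absolute constant c > 0 such that for all sufficiently large integers k and, for each such k, all sufficiently large integers N, one has G'_{[k]}(N) ≤ N^{1 − c/log k}, where [k] = {1, 2, ..., k}. -/
/-- `G'k k N` : the minimum cardinality of a finite set `B ⊆ ℤ` containing a `[k]`-pattern
`{x + r·i : 1 ≤ i ≤ k}` (a `k`-term arithmetic progression with basepoint `x` and nonzero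
common difference `r`) for `N` distinct integer basepoints `x`. -/
noncomputable def G'k (k N : ℕ) : ℕ :=
  sInf { m | ∃ B : Finset ℤ, B.card = m ∧ ∃ X : Finset ℤ, X.card = N ∧
    ∀ x ∈ X, ∃ r : ℤ, r ≠ 0 ∧ ∀ i ∈ Finset.Icc 1 k, x + r * (i : ℤ) ∈ B }

/-- Image of `v ↦ v + i * g v`. -/
def imG (M i : ℕ) (g : Fin M → Bool) : Finset ℕ :=
  Finset.univ.image (fun v : Fin M => (v : ℕ) + i * (g v).toNat)

lemma count_fun {M : ℕ} (a b : Fin M) (hab : a ≠ b) :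
    4 * (Finset.univ.filter (fun g : Fin M → Bool => g a = true ∧ g b = false)).card = 2 ^ M := by
  have h1 : (Finset.univ.filter (fun g : Fin M → Bool => g a = true ∧ g b = false)) =
      Fintype.piFinset (fun x => if x = a then {true} else if x = b then {false} else Finset.univ) := by
    ext g
    simp only [Finset.mem_filter, Finset.mem_univ, true_and, Fintype.mem_piFinset]
    constructor
    · rintro ⟨h1, h2⟩ x
      by_cases hx : x = a
      · subst hx; simp [h1]
      · by_cases hy : x = b
        · subst hy; simp [h2, hx]
        · simp [hx, hy]
    · intro h
      have ha := h a
      have hb := h b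
      simp [hab.symm] at ha hb
      exact ⟨ha, hb⟩
  rw [h1, Fintype.card_piFinset]
  have h2 : ∀ f : Fin M → ℕ, ∏ x, f x = f a * (f b * ∏ x ∈ (Finset.univ.erase a).erase b, f x) := by
    intro f
    rw [Finset.mul_prod_erase _ f (by simp [hab.symm]), Finset.mul_prod_erase _ f (by simp)]
  have h3 := h2 (fun _ => 2)
  simp only [Finset.prod_const, Finset.card_univ, Fintype.card_fin] at h3
  rw [h2, h3]
  have h4 : ∏ x ∈ (Finset.univ.erase a).erase b,
      (if x = a then ({true} : Finset Bool) else if x = b then {false} else Finset.univ).card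
      = ∏ x ∈ (Finset.univ.erase a).erase b, 2 := by
    apply Finset.prod_congr rfl
    intro x hx
    simp at hx
    simp [hx.1, hx.2]
  rw [h4]
  simp [hab.symm]
  ring

lemma card_imG (k i : ℕ) (hi : i ∈ Finset.Icc 1 k) (g : Fin (10 * k) → Bool) :
    (imG (10 * k) i g).card + (Finset.univ.filter (fun w : Fin (9 * k) =>
      g ⟨w + i, by have := w.2; simp at hi; omega⟩ = true ∧
      g ⟨w, by have := w.2; omega⟩ = false)).card ≤ 11 * k := by
  simp only [Finset.mem_Icc] at hi
  set T := (Finset.univ.filter (fun w : Fin (9 * k) =>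
      g ⟨w + i, by have := w.2; omega⟩ = true ∧
      g ⟨w, by have := w.2; omega⟩ = false)) with hT
  have hinj : (T.image (fun w : Fin (9*k) => (w : ℕ) + i)).card = T.card := by
    apply Finset.card_image_of_injective
    intro a b h
    simp at h
    exact Fin.ext h
  rw [← hinj, ← Finset.card_union_of_disjoint]
  · calc _ ≤ (Finset.range (11 * k)).card := by
          apply Finset.card_le_card
          intro v hv
          simp only [imG, Finset.mem_union, Finset.mem_image, Finset.mem_univ, true_and] at hv
          rw [Finset.mem_range]
          rcases hv with ⟨u, rfl⟩ | ⟨w, -, rfl⟩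
          · have := u.2
            cases g u <;> simp <;> omega
          · have := w.2
            omega
      _ = _ := by simp
  · rw [Finset.disjoint_left]
    intro v hv hv'
    simp only [imG, Finset.mem_image, Finset.mem_univ, true_and] at hv hv'
    obtain ⟨u, hu⟩ := hv
    obtain ⟨w, hw, hwv⟩ := hv'
    simp only [hT, Finset.mem_filter, Finset.mem_univ, true_and] at hw
    cases hg : g u
    · simp [hg] at hu
      have : u = ⟨w + i, by have := w.2; omega⟩ := Fin.ext (by simp; omega)
      rw [← this, hg] at hw
      simp at hw
    · simp [hg] at hu
      have : u = ⟨w, by have := w.2; omega⟩ := Fin.ext (by simp; omega)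
      rw [← this, hg] at hw
      simp at hw

lemma sum_imG (k i : ℕ) (hi : i ∈ Finset.Icc 1 k) :
    4 * ∑ g : Fin (10 * k) → Bool, (imG (10 * k) i g).card ≤ 35 * k * 2 ^ (10 * k) := by
  have h := Finset.sum_le_sum (fun g (_ : g ∈ (Finset.univ : Finset (Fin (10 * k) → Bool))) =>
    card_imG k i hi g)
  rw [Finset.sum_add_distrib] at h
  simp only [Finset.sum_const, Finset.card_univ, Fintype.card_pi, Fintype.card_bool,
    Finset.prod_const, Fintype.card_fin, smul_eq_mul] at h
  have h2 : 4 * ∑ g : Fin (10 * k) → Bool, (Finset.univ.filter (fun w : Fin (9 * k) =>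
      g ⟨w + i, by have := w.2; simp at hi; omega⟩ = true ∧
      g ⟨w, by have := w.2; omega⟩ = false)).card = 9 * k * 2 ^ (10 * k) := by
    simp only [Finset.card_filter]
    rw [Finset.sum_comm, Finset.mul_sum]
    simp only [← Finset.card_filter]
    rw [Finset.sum_congr rfl (fun w _ => count_fun _ _ (by
      simp at hi ⊢; omega))]
    simp
  nlinarith

lemma prod_imG (k i : ℕ) (hi : i ∈ Finset.Icc 1 k) :
    ∏ g : Fin (10 * k) → Bool, ((imG (10 * k) i g).card : ℝ) ≤
      (35 / 4 * k : ℝ) ^ (2 ^ (10 * k)) := by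
  have h := sum_imG k i hi
  have h' : (4 * ∑ g : Fin (10 * k) → Bool, ((imG (10 * k) i g).card : ℝ)) ≤
      35 * k * 2 ^ (10 * k) := by exact_mod_cast h
  have hD : (0:ℝ) < 2 ^ (10 * k) := by positivity
  have am := Real.geom_mean_le_arith_mean (Finset.univ : Finset (Fin (10 * k) → Bool))
    (fun _ => 1) (fun g => ((imG (10 * k) i g).card : ℝ)) (by simp) (by simp) (by simp)
  simp only [Real.rpow_one, one_mul, Finset.sum_const, Finset.card_univ, Fintype.card_pi,
    Fintype.card_bool, Finset.prod_const, Fintype.card_fin, nsmul_eq_mul, mul_one] at am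
  have hp : 0 ≤ ∏ g : Fin (10 * k) → Bool, ((imG (10 * k) i g).card : ℝ) :=
    Finset.prod_nonneg fun _ _ => by positivity
  have h1 : (∑ g : Fin (10 * k) → Bool, ((imG (10 * k) i g).card : ℝ)) / ((2 ^ (10 * k) : ℕ) : ℝ)
      ≤ 35 / 4 * k := by
    push_cast
    rw [div_le_iff₀ hD]
    linarith
  have h2 := pow_le_pow_left₀ (Real.rpow_nonneg hp _) (am.trans h1) (2 ^ (10 * k))
  rwa [Real.rpow_inv_natCast_pow hp (by positivity)] at h2

lemma G'k_le (k N t : ℕ) (hk : 1 ≤ k) (hN : N ≤ (10 * k) ^ (t * 2 ^ (10 * k))) :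
    (G'k k N : ℝ) ≤ k * (35 / 4 * k : ℝ) ^ (t * 2 ^ (10 * k)) := by
  classical
  set M := 10 * k with hM
  set d := t * 2 ^ M with hd
  obtain ⟨e⟩ : Nonempty (Fin d ≃ Fin t × (Fin M → Bool)) :=
    ⟨Fintype.equivOfCardEq (by simp [hd])⟩
  let B : Finset ℤ := (Finset.Icc 1 k).biUnion (fun i =>
    (Fintype.piFinset (fun j : Fin d => imG M i (e j).2)).image
      (fun h => (i : ℤ) + ∑ j : Fin d, (h j : ℤ) * (M : ℤ) ^ (j : ℕ)))
  have hB : G'k k N ≤ B.card := by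
    apply Nat.sInf_le
    refine ⟨B, rfl, (Finset.range N).image (fun n : ℕ => (n : ℤ)), ?_, ?_⟩
    · rw [Finset.card_image_of_injective _ Nat.cast_injective, Finset.card_range]
    · intro x hx
      simp only [Finset.mem_image, Finset.mem_range] at hx
      obtain ⟨n, hn, rfl⟩ := hx
      obtain ⟨f, hf⟩ := (finFunctionFinEquiv (m := M) (n := d)).surjective ⟨n, hn.trans_le hN⟩
      have hf' : n = ∑ j, (f j : ℕ) * M ^ (j : ℕ) := by
        rw [← finFunctionFinEquiv_apply, hf]
      refine ⟨1 + ∑ j, (((e j).2 (f j)).toNat : ℤ) * (M : ℤ) ^ (j : ℕ), ?_, ?_⟩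
      · have : 0 ≤ ∑ j, (((e j).2 (f j)).toNat : ℤ) * (M : ℤ) ^ (j : ℕ) :=
          Finset.sum_nonneg (fun _ _ => by positivity)
        omega
      · intro i hi
        rw [Finset.mem_biUnion]
        refine ⟨i, hi, ?_⟩
        rw [Finset.mem_image]
        refine ⟨fun j => (f j : ℕ) + i * ((e j).2 (f j)).toNat, ?_, ?_⟩
        · rw [Fintype.mem_piFinset]
          intro j
          exact Finset.mem_image_of_mem _ (Finset.mem_univ _)
        · rw [hf']
          push_cast
          simp only [add_mul, Finset.sum_add_distrib, one_mul, Finset.sum_mul]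
          rw [add_left_comm]
          congr 2
          apply Finset.sum_congr rfl
          intro j _
          ring
  have hB2 : B.card ≤ ∑ i ∈ Finset.Icc 1 k, ∏ j : Fin d, (imG M i (e j).2).card := by
    refine Finset.card_biUnion_le.trans (Finset.sum_le_sum fun i _ => ?_)
    refine Finset.card_image_le.trans ?_
    rw [Fintype.card_piFinset]
  have hB3 : (G'k k N : ℝ) ≤ ∑ i ∈ Finset.Icc 1 k, ∏ j : Fin d, ((imG M i (e j).2).card : ℝ) := by
    exact_mod_cast hB.trans hB2
  refine hB3.trans ?_
  have : ∀ i ∈ Finset.Icc 1 k, ∏ j : Fin d, ((imG M i (e j).2).card : ℝ) ≤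
      (35 / 4 * k : ℝ) ^ d := by
    intro i hi
    rw [e.prod_comp (fun p => ((imG M i p.2).card : ℝ)), Fintype.prod_prod_type]
    dsimp only
    rw [Finset.prod_const, Finset.card_univ, Fintype.card_fin]
    have hp := prod_imG k i hi
    have h0 : 0 ≤ ∏ g : Fin (10 * k) → Bool, ((imG (10 * k) i g).card : ℝ) :=
      Finset.prod_nonneg fun _ _ => Nat.cast_nonneg _
    have h2 := pow_le_pow_left₀ h0 hp t
    rw [← pow_mul, mul_comm _ t] at h2
    exact h2
  refine (Finset.sum_le_sum this).trans ?_
  simp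

/-- There is an absolute constant `c > 0` such that for all sufficiently large `k` and, for each
such `k`, all sufficiently large `N`, one has `G'_{[k]}(N) ≤ N^{1 − c/log k}`. -/
theorem stmt17 :
    ∃ c : ℝ, 0 < c ∧ ∃ k₀ : ℕ, ∀ k ≥ k₀, ∃ N₀ : ℕ, ∀ N ≥ N₀,
      (G'k k N : ℝ) ≤ (N : ℝ) ^ (1 - c / Real.log k) := by
  have hl : 0 < Real.log (8 / 7) := Real.log_pos (by norm_num)
  refine ⟨Real.log (8 / 7) / 4, by positivity, 10, fun k hk => ?_⟩
  set c := Real.log (8 / 7) / 4 with hc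
  have hkR : (10 : ℝ) ≤ k := by exact_mod_cast hk
  have hlk : 0 < Real.log k := Real.log_pos (by linarith)
  have hcp : 0 < c / Real.log k := by positivity
  set D := 2 ^ (10 * k) with hD
  have hDpos : 0 < D := by positivity
  set P := (10 * k) ^ D with hP
  have hP1 : 1 < P := Nat.one_lt_pow hDpos.ne' (by omega)
  have hten := ((tendsto_rpow_atTop hcp).comp tendsto_natCast_atTop_atTop).eventually_ge_atTop
    ((k : ℝ) * P)
  obtain ⟨N₀, hN₀⟩ := Filter.eventually_atTop.mp hten
  refine ⟨max N₀ 2, fun N hN => ?_⟩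
  have hN2 : 2 ≤ N := (le_max_right _ _).trans hN
  have hNR : (2 : ℝ) ≤ N := by exact_mod_cast hN2
  have h1 := hN₀ N ((le_max_left _ _).trans hN)
  simp only [Function.comp] at h1
  obtain ⟨t, ht⟩ : ∃ t, t = Nat.clog P N := ⟨_, rfl⟩
  have ht1 : N ≤ P ^ t := ht ▸ Nat.le_pow_clog hP1 N
  have ht2 : P ^ t ≤ P * N := by
    have h := Nat.pow_pred_clog_lt_self hP1 (by omega : 1 < N)
    have h0 : 0 < t := ht ▸ Nat.clog_pos hP1 hN2
    rw [← ht] at h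
    obtain ⟨s, rfl⟩ : ∃ s, t = s + 1 := ⟨t - 1, by omega⟩
    simp at h
    rw [pow_succ, mul_comm]
    exact Nat.mul_le_mul_left _ h.le
  have hPt : P ^ t = (10 * k) ^ (t * D) := by rw [hP, ← pow_mul, mul_comm D t]
  have hG := G'k_le k N t (by omega) (hPt ▸ ht1)
  rw [← hD] at hG
  refine hG.trans ?_
  have hsplit : (35 / 4 * k : ℝ) ^ (t * D) = (7 / 8 : ℝ) ^ (t * D) * (P : ℝ) ^ t := by
    have : (P : ℝ) ^ t = (10 * k : ℝ) ^ (t * D) := by exact_mod_cast hPt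
    rw [this, ← mul_pow]; congr 1; ring
  have hNpos : (0 : ℝ) < N := by linarith
  have hsmall : (7 / 8 : ℝ) ^ (t * D) ≤ (N : ℝ) ^ (-(2 * (c / Real.log k))) := by
    rw [← Real.log_le_log_iff (by positivity) (by positivity), Real.log_pow, Real.log_rpow hNpos]
    have hlN : Real.log N ≤ (t * D : ℕ) * Real.log (10 * k) := by
      rw [← Real.log_pow]
      apply Real.log_le_log hNpos
      rw [hPt] at ht1
      exact_mod_cast ht1
    have hl10 : Real.log (10 * k) ≤ 2 * Real.log k := by
      rw [Real.log_mul (by norm_num) (by linarith)]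
      have := Real.log_le_log (by norm_num) hkR
      linarith
    have h78 : Real.log (7 / 8) = - (4 * c) := by
      have : (7 / 8 : ℝ) = (8 / 7)⁻¹ := by norm_num
      rw [hc, this, Real.log_inv]
      ring
    have h3 : Real.log N ≤ (t * D : ℕ) * (2 * Real.log k) :=
      hlN.trans (mul_le_mul_of_nonneg_left hl10 (by positivity))
    have h4 : 2 * (c / Real.log k) * Real.log N ≤
        2 * (c / Real.log k) * ((t * D : ℕ) * (2 * Real.log k)) :=
      mul_le_mul_of_nonneg_left h3 (by positivity)
    have h5 : 2 * (c / Real.log k) * ((t * D : ℕ) * (2 * Real.log k)) = (t * D : ℕ) * (4 * c) := by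
      field_simp
      ring
    rw [h78]
    linarith
  have hPt2 : (P : ℝ) ^ t ≤ P * N := by exact_mod_cast ht2
  calc (k : ℝ) * (35 / 4 * k : ℝ) ^ (t * D)
      = k * ((7 / 8 : ℝ) ^ (t * D) * (P : ℝ) ^ t) := by rw [hsplit]
    _ ≤ k * ((N : ℝ) ^ (-(2 * (c / Real.log k))) * (P * N)) := by gcongr
    _ = (k * P) * ((N : ℝ) ^ (-(2 * (c / Real.log k))) * N) := by ring
    _ ≤ (N : ℝ) ^ (c / Real.log k) * ((N : ℝ) ^ (-(2 * (c / Real.log k))) * N) := by gcongr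
    _ = (N : ℝ) ^ (c / Real.log k) * ((N : ℝ) ^ (-(2 * (c / Real.log k))) * (N : ℝ) ^ (1 : ℝ)) := by
        rw [Real.rpow_one]
    _ = (N : ℝ) ^ (1 - c / Real.log k) := by
        rw [← Real.rpow_add hNpos, ← Real.rpow_add hNpos]
        congr 1
        ring
end
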